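/- arXiv:1707.05396 — 2 statements merged into one kernel-verified Lean document; each statement's English description precedes it below -/
import Mathlib

section
/- If a graph G satisfies P*_{K₂,p}(δ) for some p ∈ [0,1] and δ > 0, then for every pair of subsets A, B ⊆ V(G), |e(A,B) − p·|A|·|B|| ≤ 4·δ·v(G)². -/
/-! Let `D(A,B) = e(A,B) - p|A||B|`. This is a symmetric form, bilinear in the indicator functions
of `A` and `B`, and the hypothesis says that `|D(U,U)| ≤ δ v(G)²` for every `U`, because
`e(U,U) = 2 e(G[U])` (`two_mul_inducedEdgeCount`). Polarization gives
`2 D(A,B) = D(A ∪ B, A ∪ B) + D(A ∩ B, A ∩ B) - D(A \ B, A \ B) - D(B \ A, B \ A)`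
(`two_mul_discrepancy`), so in fact `|D(A,B)| ≤ 2 δ v(G)²`, which is stronger than required. -/

open Finset

/-- Number of homomorphisms `φ : H → G` with `φ i ∈ U i` for each vertex `i` of `H`. -/
noncomputable def homCount {α β : Type} [Fintype α] [Fintype β]
    (H : SimpleGraph α) (G : SimpleGraph β) (U : α → Finset β) : ℕ :=
  Nat.card {φ : α → β // (∀ i, φ i ∈ U i) ∧ ∀ i j, H.Adj i j → G.Adj (φ i) (φ j)}

/-- Number of edges of a graph. -/
noncomputable def edgeCount {α : Type} [Fintype α] (H : SimpleGraph α) : ℕ :=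
  Nat.card H.edgeSet

/-- Number of edges of the induced subgraph `G[U]`. -/
noncomputable def inducedEdgeCount {β : Type} [Fintype β] (G : SimpleGraph β)
    (U : Finset β) : ℕ :=
  Nat.card (G.induce (U : Set β)).edgeSet

/-- The quasirandomness property `R_{H,p}(δ)`. -/
def PropR {α β : Type} [Fintype α] [Fintype β]
    (H : SimpleGraph α) (G : SimpleGraph β) (p δ : ℝ) : Prop :=
  ∀ U : α → Finset β, (∀ i j, i ≠ j → Disjoint (U i) (U j)) →
    |(homCount H G U : ℝ) - p ^ edgeCount H * ∏ i, ((U i).card : ℝ)| ≤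
      δ * (Fintype.card β : ℝ) ^ (Fintype.card α)

/-- The quasirandomness property `R'_{H,p}(δ)`. -/
def PropR' {α β : Type} [Fintype α] [Fintype β]
    (H : SimpleGraph α) (G : SimpleGraph β) (p δ : ℝ) : Prop :=
  ∀ U : α → Finset β,
    |(homCount H G U : ℝ) - p ^ edgeCount H * ∏ i, ((U i).card : ℝ)| ≤
      δ * (Fintype.card β : ℝ) ^ (Fintype.card α)

/-- The hereditary quasirandomness property `P*_{K₂,p}(ε)`. -/
def PropStar {β : Type} [Fintype β] (G : SimpleGraph β) (p ε : ℝ) : Prop :=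
  ∀ U : Finset β,
    |2 * (inducedEdgeCount G U : ℝ) - p * (U.card : ℝ) ^ 2| ≤
      ε * (Fintype.card β : ℝ) ^ 2

/-- `e(A,B)`: the number of ordered pairs `(a,b) ∈ A × B` with `{a,b}` an edge of `G`
(edges inside `A ∩ B` are counted twice). -/
noncomputable def pairEdgeCount {β : Type} [Fintype β] (G : SimpleGraph β)
    (A B : Finset β) : ℕ :=
  Nat.card {ab : β × β // ab.1 ∈ A ∧ ab.2 ∈ B ∧ G.Adj ab.1 ab.2}

/-- Each edge of `G[U]` corresponds to its two orientations in `U × U`. -/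
lemma two_mul_inducedEdgeCount {β : Type} [Fintype β] (G : SimpleGraph β) (U : Finset β) :
    2 * inducedEdgeCount G U = pairEdgeCount G U U := by
  classical
  unfold inducedEdgeCount pairEdgeCount
  rw [Nat.card_eq_fintype_card, ← SimpleGraph.edgeFinset_card,
    ← SimpleGraph.dart_card_eq_twice_card_edges, ← Nat.card_eq_fintype_card]
  exact Nat.card_congr
    { toFun := fun d => ⟨(d.fst, d.snd), d.fst.2, d.snd.2, d.adj⟩
      invFun := fun x => ⟨(⟨x.1.1, x.2.1⟩, ⟨x.1.2, x.2.2.1⟩), x.2.2.2⟩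
      left_inv := fun _ => rfl
      right_inv := fun _ => rfl }

open Classical in
/-- The discrepancy as a bilinear form in the indicator functions of `A` and `B`. -/
lemma discrepancy_eq_sum {β : Type} [Fintype β] (G : SimpleGraph β) (p : ℝ) (A B : Finset β) :
    (pairEdgeCount G A B : ℝ) - p * (A.card : ℝ) * (B.card : ℝ) =
      ∑ a, ∑ b, (if a ∈ A then 1 else 0) * (if b ∈ B then 1 else 0) *
        ((if G.Adj a b then 1 else 0) - p) := by
  have h1 : (pairEdgeCount G A B : ℝ) = ∑ a, ∑ b, (if a ∈ A then (1 : ℝ) else 0) *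
      (if b ∈ B then 1 else 0) * (if G.Adj a b then 1 else 0) := by
    unfold pairEdgeCount
    rw [Nat.card_eq_fintype_card, Fintype.card_subtype, Finset.card_filter, Nat.cast_sum,
      Fintype.sum_prod_type]
    refine Finset.sum_congr rfl fun a _ => Finset.sum_congr rfl fun b _ => ?_
    by_cases ha : a ∈ A <;> by_cases hb : b ∈ B <;> simp [ha, hb]
  have h2 : ∀ S : Finset β, (S.card : ℝ) = ∑ a, if a ∈ S then (1 : ℝ) else 0 := by
    intro S
    simp
  have h3 : (A.card : ℝ) * B.card = ∑ a, ∑ b, (if a ∈ A then (1 : ℝ) else 0) *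
      (if b ∈ B then 1 else 0) := by
    rw [h2 A, h2 B, Finset.sum_mul_sum]
  simp only [mul_sub, Finset.sum_sub_distrib, ← Finset.sum_mul]
  simp only [← Finset.mul_sum]
  rw [h1, mul_assoc, h3]
  simp only [Finset.mul_sum, mul_comm]

open Classical in
/-- Polarization of the form `e(A,B) - p|A||B|`. -/
lemma two_mul_discrepancy {β : Type} [Fintype β] (G : SimpleGraph β) (p : ℝ)
    (D : Finset β → Finset β → ℝ)
    (hD : ∀ A B, D A B = (pairEdgeCount G A B : ℝ) - p * (A.card : ℝ) * (B.card : ℝ))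
    (A B : Finset β) :
    2 * D A B = D (A ∪ B) (A ∪ B) + D (A ∩ B) (A ∩ B) - D (A \ B) (A \ B) -
      D (B \ A) (B \ A) := by
  have hsymm : D A B = D B A := by
    rw [hD, hD, discrepancy_eq_sum, discrepancy_eq_sum, Finset.sum_comm]
    refine Finset.sum_congr rfl fun a _ => Finset.sum_congr rfl fun b _ => ?_
    rw [G.adj_comm, mul_comm (if b ∈ A then (1 : ℝ) else 0)]
  rw [two_mul]
  nth_rewrite 2 [hsymm]
  simp only [hD, discrepancy_eq_sum, ← Finset.sum_add_distrib, ← Finset.sum_sub_distrib]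
  -- The identity holds termwise, according to which of `A`, `B` contain `a` and `b`.
  refine Finset.sum_congr rfl fun a _ => Finset.sum_congr rfl fun b _ => ?_
  by_cases h1 : a ∈ A <;> by_cases h2 : a ∈ B <;> by_cases h3 : b ∈ A <;> by_cases h4 : b ∈ B <;>
    simp [h1, h2, h3, h4]

/-- If `G` satisfies `P*_{K₂,p}(δ)` then for every pair of subsets `A, B ⊆ V(G)`,
`|e(A,B) − p |A| |B|| ≤ 4 δ v(G)²`. -/
theorem stmt5 {β : Type} [Fintype β] (G : SimpleGraph β) (p δ : ℝ)
    (hp0 : 0 ≤ p) (hp1 : p ≤ 1) (hδ : 0 < δ) (hG : PropStar G p δ) :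
    ∀ A B : Finset β,
      |(pairEdgeCount G A B : ℝ) - p * (A.card : ℝ) * (B.card : ℝ)| ≤
        4 * δ * (Fintype.card β : ℝ) ^ 2 := by
  classical
  intro A B
  set D : Finset β → Finset β → ℝ := fun A B =>
    (pairEdgeCount G A B : ℝ) - p * (A.card : ℝ) * (B.card : ℝ) with hD
  have hdiag : ∀ U, |D U U| ≤ δ * (Fintype.card β : ℝ) ^ 2 := by
    intro U
    have h := hG U
    have h2 : 2 * (inducedEdgeCount G U : ℝ) = pairEdgeCount G U U := by
      exact_mod_cast two_mul_inducedEdgeCount G U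
    rwa [h2, sq, ← mul_assoc] at h
  have hpol := two_mul_discrepancy G p D (fun _ _ => rfl) A B
  have hn : 0 ≤ δ * (Fintype.card β : ℝ) ^ 2 := by positivity
  change |D A B| ≤ _
  have h1 := abs_le.1 (hdiag (A ∪ B))
  have h2 := abs_le.1 (hdiag (A ∩ B))
  have h3 := abs_le.1 (hdiag (A \ B))
  have h4 := abs_le.1 (hdiag (B \ A))
  rw [abs_le]
  constructor <;> linarith
end

section
/- For every graph H there exists a constant C > 0 depending only on H such that for every p ∈ [0,1], every δ > 0, and every graph G satisfying R_{H,p}(δ), the following holds: for every subset U ⊆ V(G), |c(H,G[U]) − p^{e(H)}·|U|^{v(H)}| ≤ C·δ·v(G)^{v(H)} + C·v(G)^{v(H)−1}, where c(H,G[U]) = c(H,G;U,…,U) is the number of homomorphisms from H to the induced subgraph of G on U. -/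
/-!
Write `r = v(H)`, `n = v(G)`, and give each map `φ : V(H) → U` the weight
`D φ = 1[φ is a homomorphism] - p ^ e(H)`, so that the quantity to bound is `|∑ D φ|`, and the
discrepancy in `R_{H,p}(δ)` is the same sum restricted to the maps with `φ i ∈ U i`.

The disjoint families `U i` are obtained from colourings `f : V(G) → V(H)`, by letting `U i` be the
set of vertices of `U` of colour `i`. Summing the discrepancies over all `r ^ n` colourings counts
`φ` once for every `f` with `f ∘ φ = id`: never if `φ` is not injective, and `r ^ (n - r)` times if
it is (`card_colorings_mul`). Hence the sum of `D` over the injective maps is at most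
`r ^ r * δ * n ^ r` in absolute value. The non-injective maps number at most `r ^ 2 * n ^ (r - 1)`
(`card_not_injective_le`), and each has `|D φ| ≤ 1`.
-/

open Finset

open Classical in
/-- The weight `1[φ is a homomorphism] - p ^ e(H)` of a map `φ : V(H) → V(G)`. -/
noncomputable def homDev {α β : Type} [Fintype α] (H : SimpleGraph α) (G : SimpleGraph β) (p : ℝ)
    (φ : α → β) : ℝ :=
  (if ∀ i j, H.Adj i j → G.Adj (φ i) (φ j) then 1 else 0) - p ^ edgeCount H

open Classical in
lemma homCount_sub_eq {α β : Type} [Fintype α] [Fintype β] (H : SimpleGraph α)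
    (G : SimpleGraph β) (p : ℝ) (U : α → Finset β) :
    (homCount H G U : ℝ) - p ^ edgeCount H * ∏ i, ((U i).card : ℝ) =
      ∑ φ ∈ Fintype.piFinset U, homDev H G p φ := by
  have h1 : (homCount H G U : ℝ) = ∑ φ ∈ Fintype.piFinset U,
      (if ∀ i j, H.Adj i j → G.Adj (φ i) (φ j) then (1 : ℝ) else 0) := by
    rw [Finset.sum_boole, homCount, Nat.card_eq_fintype_card, Fintype.card_subtype]
    congr 2
    ext φ
    simp [Fintype.mem_piFinset]
  unfold homDev
  rw [Finset.sum_sub_distrib, ← h1, Finset.sum_const, Fintype.card_piFinset, nsmul_eq_mul]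
  push_cast
  ring

lemma abs_homDev_le {α β : Type} [Fintype α] (H : SimpleGraph α) (G : SimpleGraph β) {p : ℝ}
    (h0 : 0 ≤ p) (h1 : p ≤ 1) (φ : α → β) : |homDev H G p φ| ≤ 1 := by
  have h2 : 0 ≤ p ^ edgeCount H := pow_nonneg h0 _
  have h3 : p ^ edgeCount H ≤ 1 := pow_le_one₀ h0 h1
  unfold homDev
  rw [abs_le]
  split_ifs <;> constructor <;> linarith

open Classical in
/-- An injective `φ` has `r ^ (n - r)` colourings `f` with `f ∘ φ = id`, since these are prescribed
on the range of `φ` and free elsewhere. Multiplying by `r ^ r` avoids the subtraction. -/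
lemma card_colorings_mul {α β : Type} [Fintype α] [Fintype β] (φ : α → β)
    (hφ : Function.Injective φ) :
    (univ.filter fun f : β → α => ∀ i, f (φ i) = i).card * Fintype.card α ^ Fintype.card α =
      Fintype.card α ^ Fintype.card β := by
  have h : (univ.filter fun f : β → α => ∀ i, f (φ i) = i) =
      Fintype.piFinset fun b => univ.filter fun a => ∀ i, φ i = b → a = i := by
    ext f
    simp only [mem_filter, mem_univ, true_and, Fintype.mem_piFinset]
    exact ⟨fun h b i hb => hb ▸ h i, fun h i => h _ i rfl⟩
  have h2 : ∀ b, (univ.filter fun a => ∀ i, φ i = b → a = i).card =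
      if b ∈ univ.image φ then 1 else Fintype.card α := by
    intro b
    split_ifs with hb
    · obtain ⟨i, -, rfl⟩ := mem_image.1 hb
      rw [card_eq_one]
      refine ⟨i, ?_⟩
      ext a
      simp only [mem_filter, mem_univ, true_and, mem_singleton]
      exact ⟨fun h => h i rfl, fun h j hj => h.trans (hφ hj).symm⟩
    · rw [filter_true_of_mem, card_univ]
      intro a _ i hi
      exact absurd (mem_image.2 ⟨i, mem_univ _, hi⟩) hb
  have h3 : Fintype.card α ^ Fintype.card α =
      ∏ b : β, if b ∈ univ.image φ then Fintype.card α else 1 := by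
    rw [prod_ite_mem, univ_inter, prod_const, card_image_of_injective _ hφ, card_univ]
  rw [h, Fintype.card_piFinset, prod_congr rfl fun b _ => h2 b, h3, ← prod_mul_distrib]
  conv_rhs => rw [← card_univ (α := β), ← prod_const]
  refine prod_congr rfl fun b _ => ?_
  split_ifs <;> simp

open Classical in
lemma card_not_injective_le (α β : Type) [Fintype α] [Fintype β] :
    (univ.filter fun φ : α → β => ¬ Function.Injective φ).card ≤
      Fintype.card α ^ 2 * Fintype.card β ^ (Fintype.card α - 1) := by
  have hsub : (univ.filter fun φ : α → β => ¬ Function.Injective φ) ⊆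
      ((univ : Finset (α × α)).filter fun q => q.1 ≠ q.2).biUnion
        fun q => univ.filter fun φ : α → β => φ q.1 = φ q.2 := by
    intro φ hφ
    have hφ := (mem_filter.1 hφ).2
    simp only [Function.Injective] at hφ
    push Not at hφ
    obtain ⟨i, j, h, hij⟩ := hφ
    simp only [mem_biUnion, mem_filter, mem_univ, true_and]
    exact ⟨(i, j), hij, h⟩
  refine (card_le_card hsub).trans ((card_biUnion_le_card_mul _ _
    (Fintype.card β ^ (Fintype.card α - 1)) ?_).trans ?_)
  · rintro ⟨i, j⟩ hij
    simp only [mem_filter, mem_univ, true_and] at hij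
    -- A map with `φ i = φ j` is determined by its restriction to the vertices other than `j`.
    have hc : Fintype.card ({x : α // x ≠ j} → β) = Fintype.card β ^ (Fintype.card α - 1) := by
      rw [Fintype.card_fun, Fintype.card_subtype_compl, Fintype.card_subtype_eq]
    rw [← hc, ← card_univ]
    refine card_le_card_of_injOn (fun φ x => φ x.1) (fun _ _ => by simp) ?_
    intro φ hφ ψ hψ h
    simp only [coe_filter, mem_univ, true_and, Set.mem_ofPred_eq] at hφ hψ
    have hne : ∀ x, x ≠ j → φ x = ψ x := fun x hx => congrFun h ⟨x, hx⟩
    ext x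
    by_cases hx : x = j
    · rw [hx, ← hφ, ← hψ, hne i hij]
    · exact hne x hx
  · refine Nat.mul_le_mul_right _ ((card_filter_le _ _).trans ?_)
    simp [sq]

open Classical in
/-- The averaging step, with the total number `r ^ n` of colourings cancelled. -/
lemma abs_sum_injective_le {α β : Type} [Fintype α] [Fintype β] [Nonempty α]
    (H : SimpleGraph α) (G : SimpleGraph β) {p δ : ℝ} (hR : PropR H G p δ) (U : Finset β) :
    |∑ φ ∈ (Fintype.piFinset fun _ : α => U) with Function.Injective φ, homDev H G p φ| ≤
      (Fintype.card α : ℝ) ^ Fintype.card α *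
        (δ * (Fintype.card β : ℝ) ^ Fintype.card α) := by
  set T := Fintype.piFinset fun _ : α => U
  set r := (Fintype.card α : ℝ) with hr
  set S := ∑ φ ∈ T with Function.Injective φ, homDev H G p φ
  set B := δ * (Fintype.card β : ℝ) ^ Fintype.card α
  have hrpos : 0 < r := by rw [hr]; exact_mod_cast Fintype.card_pos
  have hf : ∀ f : β → α, |∑ φ ∈ T, if ∀ i, f (φ i) = i then homDev H G p φ else 0| ≤ B := by
    intro f
    have h := hR (fun i => U.filter fun u => f u = i) (by
      intro i j hij
      rw [Finset.disjoint_left]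
      intro u hu hu'
      exact hij ((mem_filter.1 hu).2.symm.trans (mem_filter.1 hu').2))
    rw [homCount_sub_eq] at h
    rw [← sum_filter]
    convert h using 3
    ext φ
    simp [T, Fintype.mem_piFinset, forall_and]
  have hswap : r ^ Fintype.card α *
      ∑ f : β → α, ∑ φ ∈ T, (if ∀ i, f (φ i) = i then homDev H G p φ else 0) =
        r ^ Fintype.card β * S := by
    rw [sum_comm, mul_sum, mul_sum, sum_filter]
    refine sum_congr rfl fun φ _ => ?_
    rw [← sum_filter, sum_const, nsmul_eq_mul]
    split_ifs with hφ
    · have h := card_colorings_mul φ hφ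
      have h' : ((univ.filter fun f : β → α => ∀ i, f (φ i) = i).card : ℝ) *
          r ^ Fintype.card α = r ^ Fintype.card β := by rw [hr]; exact_mod_cast h
      rw [← h']
      ring
    · rw [filter_false_of_mem]
      · simp
      · intro f _ h
        exact hφ (Function.LeftInverse.injective (g := f) h)
  have hsum : |∑ f : β → α, ∑ φ ∈ T, (if ∀ i, f (φ i) = i then homDev H G p φ else 0)| ≤
      r ^ Fintype.card β * B := by
    refine (abs_sum_le_sum_abs _ _).trans ((sum_le_sum fun f _ => hf f).trans ?_)
    rw [sum_const, card_univ, Fintype.card_fun, nsmul_eq_mul]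
    push_cast
    exact le_rfl
  have hn : 0 < r ^ Fintype.card β := pow_pos hrpos _
  have hrr : 0 < r ^ Fintype.card α := pow_pos hrpos _
  refine le_of_mul_le_mul_left ?_ hn
  calc r ^ Fintype.card β * |S| = |r ^ Fintype.card β * S| := by rw [abs_mul, abs_of_pos hn]
    _ ≤ r ^ Fintype.card α * (r ^ Fintype.card β * B) := by
      rw [← hswap, abs_mul, abs_of_pos hrr]
      exact mul_le_mul_of_nonneg_left hsum hrr.le
    _ = r ^ Fintype.card β * (r ^ Fintype.card α * B) := by ring

/-- For every graph `H` there is `C > 0` depending only on `H` such that for every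
`p ∈ [0,1]`, `δ > 0`, and every graph `G` satisfying `R_{H,p}(δ)`: for every `U ⊆ V(G)`,
`|c(H,G[U]) − p^{e(H)} |U|^{v(H)}| ≤ C δ v(G)^{v(H)} + C v(G)^{v(H)−1}`, where
`c(H,G[U]) = c(H,G;U,…,U)`. -/
theorem stmt13 {α : Type} [Fintype α] (H : SimpleGraph α) :
    ∃ C : ℝ, 0 < C ∧ ∀ p : ℝ, 0 ≤ p → p ≤ 1 → ∀ δ : ℝ, 0 < δ →
      ∀ (β : Type) [Fintype β] (G : SimpleGraph β), PropR H G p δ →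
        ∀ U : Finset β,
          |(homCount H G (fun _ => U) : ℝ) -
              p ^ edgeCount H * (U.card : ℝ) ^ (Fintype.card α)| ≤
            C * δ * (Fintype.card β : ℝ) ^ (Fintype.card α) +
              C * (Fintype.card β : ℝ) ^ (Fintype.card α - 1) := by
  classical
  refine ⟨(Fintype.card α : ℝ) ^ Fintype.card α + (Fintype.card α : ℝ) ^ 2 + 1, by positivity, ?_⟩
  intro p h0 h1 δ hδ β _ G hR U
  set r := (Fintype.card α : ℝ) with hr
  set n := (Fintype.card β : ℝ) with hn
  have hn0 : 0 ≤ n := by rw [hn]; positivity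
  have hr0 : 0 ≤ r := by rw [hr]; positivity
  have hA : 0 ≤ δ * n ^ Fintype.card α := by positivity
  have hB : 0 ≤ n ^ (Fintype.card α - 1) := by positivity
  have hrr : 0 ≤ r ^ Fintype.card α := by positivity
  have key := homCount_sub_eq H G p (fun _ : α => U)
  rw [prod_const, card_univ] at key
  rcases isEmpty_or_nonempty α with hα | hα
  · -- Without vertices in `H` every family is disjoint, so the hypothesis applies to `U, …, U`.
    have h := hR (fun _ => U) (fun i => isEmptyElim i)
    rw [prod_const, card_univ] at h
    refine h.trans ?_
    nlinarith [mul_nonneg hrr hA, mul_nonneg (sq_nonneg r) hA, mul_nonneg hrr hB,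
      mul_nonneg (sq_nonneg r) hB]
  rw [key, ← sum_filter_add_sum_filter_not _ (fun φ : α → β => Function.Injective φ)]
  have hI := abs_sum_injective_le H G hR U
  have hJ : |∑ φ ∈ (Fintype.piFinset fun _ : α => U) with ¬ Function.Injective φ,
      homDev H G p φ| ≤ r ^ 2 * n ^ (Fintype.card α - 1) := by
    refine (abs_sum_le_sum_abs _ _).trans ((sum_le_sum fun φ _ => abs_homDev_le H G h0 h1 φ).trans ?_)
    rw [sum_const, nsmul_eq_mul, mul_one, hr, hn]
    exact_mod_cast (card_le_card (filter_subset_filter _ (subset_univ _))).trans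
      (card_not_injective_le α β)
  refine (abs_add_le _ _).trans ((add_le_add hI hJ).trans ?_)
  nlinarith [mul_nonneg (sq_nonneg r) hA, mul_nonneg hrr hB]
end
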